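/- arXiv:nlin/0104037 — 14 statements merged into one kernel-verified Lean document; each statement's English description precedes it below -/
import Mathlib

section
/- Let X, Y : ℤ² → ℝ³ and p, q, Γ : ℤ² → ℝ satisfy Γ² = 1 − pq, Γ ≠ 0 at every lattice point, together with the direct linear system X₍₂₎ = (X + qY)/Γ, Y₍₁₎ = (Y + pX)/Γ. If at a lattice point 2 X·Y + p‖X‖² + q‖Y‖² = 0, then ‖X₍₂₎‖² = ‖X‖² and ‖Y₍₁₎‖² = ‖Y‖² at that point. Conversely, if at a lattice point ‖X₍₂₎‖² = ‖X‖², ‖Y₍₁₎‖² = ‖Y‖², and p ≠ 0 or q ≠ 0, then 2 X·Y + p‖X‖² + q‖Y‖² = 0 at that point. -/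
/-!
Write `E = 2 X·Y + p‖X‖² + q‖Y‖²`. Expanding the squared norms in the linear system and using
`Γ² = 1 - pq` gives `Γ² (‖X₍₂₎‖² - ‖X‖²) = q E` and, with the roles of `X, q` and `Y, p` exchanged,
`Γ² (‖Y₍₁₎‖² - ‖Y‖²) = p E`. Since `Γ ≠ 0`, both directions can be read off these two identities,
which are instances of `norm_defect`.
-/

noncomputable section

/-- Shift in the first lattice direction: `f₍₁₎(n₁,n₂) = f(n₁+1,n₂)`. -/
def s1 (n : ℤ × ℤ) : ℤ × ℤ := (n.1 + 1, n.2)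

/-- Shift in the second lattice direction: `f₍₂₎(n₁,n₂) = f(n₁,n₂+1)`. -/
def s2 (n : ℤ × ℤ) : ℤ × ℤ := (n.1, n.2 + 1)

/-- Euclidean inner product on ℝ³. -/
def dot3 (u v : Fin 3 → ℝ) : ℝ := ∑ i, u i * v i

/-- One step `u ↦ (u + b v)/g` of the linear system changes the squared norm of `u` by `b/g²` times
the orthogonality defect. -/
theorem norm_defect (u v : Fin 3 → ℝ) (a b g : ℝ) (hg : g ^ 2 = 1 - a * b) (hg0 : g ≠ 0) :
    g ^ 2 * (dot3 (g⁻¹ • (u + b • v)) (g⁻¹ • (u + b • v)) - dot3 u u) =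
      b * (2 * dot3 u v + a * dot3 u u + b * dot3 v v) := by
  have hscale : g ^ 2 * dot3 (g⁻¹ • (u + b • v)) (g⁻¹ • (u + b • v)) =
      dot3 (u + b • v) (u + b • v) := by
    simp only [dot3, Fin.sum_univ_three, Pi.smul_apply, Pi.add_apply, smul_eq_mul]
    field_simp
  rw [mul_sub, hscale, hg]
  simp only [dot3, Fin.sum_univ_three, Pi.smul_apply, Pi.add_apply, smul_eq_mul]
  ring

theorem dot3_comm (u v : Fin 3 → ℝ) : dot3 u v = dot3 v u := by
  simp only [dot3, mul_comm]

/-- the discrete orthogonality condition `2X·Y + p‖X‖² + q‖Y‖² = 0` implies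
`‖X₍₂₎‖² = ‖X‖²` and `‖Y₍₁₎‖² = ‖Y‖²`; conversely these two conditions together with
`p ≠ 0 ∨ q ≠ 0` imply the orthogonality condition. -/
theorem stmt_1 (X Y : ℤ × ℤ → Fin 3 → ℝ) (p q Γ : ℤ × ℤ → ℝ)
    (hΓ : ∀ n, Γ n ^ 2 = 1 - p n * q n) (hΓ0 : ∀ n, Γ n ≠ 0)
    (hX : ∀ n, X (s2 n) = (Γ n)⁻¹ • (X n + q n • Y n))
    (hY : ∀ n, Y (s1 n) = (Γ n)⁻¹ • (Y n + p n • X n)) :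
    ∀ n, (2 * dot3 (X n) (Y n) + p n * dot3 (X n) (X n) + q n * dot3 (Y n) (Y n) = 0 →
        dot3 (X (s2 n)) (X (s2 n)) = dot3 (X n) (X n) ∧
          dot3 (Y (s1 n)) (Y (s1 n)) = dot3 (Y n) (Y n)) ∧
      (dot3 (X (s2 n)) (X (s2 n)) = dot3 (X n) (X n) →
        dot3 (Y (s1 n)) (Y (s1 n)) = dot3 (Y n) (Y n) →
        (p n ≠ 0 ∨ q n ≠ 0) →
        2 * dot3 (X n) (Y n) + p n * dot3 (X n) (X n) + q n * dot3 (Y n) (Y n) = 0) := by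
  intro n
  have hg2 : Γ n ^ 2 ≠ 0 := pow_ne_zero 2 (hΓ0 n)
  have h1 := norm_defect (X n) (Y n) (p n) (q n) (Γ n) (hΓ n) (hΓ0 n)
  have h2 := norm_defect (Y n) (X n) (q n) (p n) (Γ n) (by rw [hΓ n, mul_comm]) (hΓ0 n)
  rw [← hX n] at h1
  rw [← hY n, dot3_comm (Y n) (X n), add_right_comm] at h2
  refine ⟨fun h => ⟨?_, ?_⟩, fun hx hy hpq => ?_⟩
  · rw [h, mul_zero] at h1
    exact sub_eq_zero.mp ((mul_eq_zero.mp h1).resolve_left hg2)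
  · rw [h, mul_zero] at h2
    exact sub_eq_zero.mp ((mul_eq_zero.mp h2).resolve_left hg2)
  · rw [hx, sub_self, mul_zero] at h1
    rw [hy, sub_self, mul_zero] at h2
    rcases hpq with hp | hq
    · exact (mul_eq_zero.mp h2.symm).resolve_left hp
    · exact (mul_eq_zero.mp h1.symm).resolve_left hq
end
end

section
/- Let X, Y : ℤ² → ℝ³ and scalar functions H, K, p, q, Γ : ℤ² → ℝ satisfy Γ² = 1 − pq, Γ ≠ 0 at every lattice point, the direct linear system X₍₂₎ = (X + qY)/Γ, Y₍₁₎ = (Y + pX)/Γ, and the adjoint linear system H₍₂₎ = (H + pK)/Γ, K₍₁₎ = (K + qH)/Γ. Assume ‖X‖² = 1, ‖Y‖² = 1 and the curvature-lattice condition 2 X·Y + p + q = 0 at every lattice point. Fix a lattice point at which (X·Y)² ≠ 1 and H ≠ 0, K ≠ 0, H₍₂₎ ≠ 0, K₍₁₎ ≠ 0, and let R ∈ ℝ³. Then the four vertices R, R + X·H, R + Y·K, R + Y·K + X₍₂₎·H₍₂₎ of the lattice quadrilateral are concyclic, i.e. they lie on a common circle in ℝ³ (they are coplanar and lie on a common sphere).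 -/
/-!
Place the origin at `R` and write `x, y` for the unit vectors `X, Y`, `c = x · y`, and `h, k` for
`H, K`. By the linear systems the fourth vertex is `αx + βy` with `α = (h + pk)/Γ²` and
`β = (k + qh)/Γ²`, so all vertices lie in the plane spanned by `x, y`. Since `c² ≠ 1`, that plane
contains a point `C` with `2 C · x = h` and `2 C · y = k`, which is the circumcentre of
`0, hx, ky`. A vertex `v` is on its sphere iff `v · v = 2 C · v`, which for the fourth vertex
reads `α² + β² + 2cαβ = αh + βk`; substituting `2c = -(p + q)` and `Γ² = 1 - pq`, this is a
polynomial identity.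
-/

noncomputable section

open scoped RealInnerProductSpace

/-- If `R + v` has `v · v = 2 C · v`, then it is as far from `R + C` as `R` is. -/
lemma dist_add_center_eq {E : Type*} [NormedAddCommGroup E] [InnerProductSpace ℝ E]
    (R C v : E) (h : ⟪v, v⟫ = 2 * ⟪C, v⟫) : dist (R + v) (R + C) = ‖C‖ := by
  rw [dist_add_left, dist_eq_norm, ← sq_eq_sq₀ (norm_nonneg _) (norm_nonneg _),
    norm_sub_sq_real, ← real_inner_self_eq_norm_sq v, h, real_inner_comm v C]
  ring

/-- Points of the form `R + v`, with `v` in the span of two fixed vectors, are coplanar. -/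
lemma coplanar_of_sub_mem_span_pair {E : Type*} [NormedAddCommGroup E] [InnerProductSpace ℝ E]
    (R x y : E) (s : Set E) (h : ∀ v ∈ s, v - R ∈ Submodule.span ℝ {x, y}) : Coplanar ℝ s := by
  have hle : vectorSpan ℝ s ≤ Submodule.span ℝ {x, y} := by
    rw [vectorSpan, Submodule.span_le]
    rintro _ ⟨a, ha, b, hb, rfl⟩
    have := Submodule.sub_mem _ (h a ha) (h b hb)
    simpa using this
  refine (Submodule.rank_mono hle).trans ((rank_span_le _).trans ?_)
  exact (Cardinal.mk_insert_le).trans (by simp [one_add_one_eq_two])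

/-- For independent unit vectors `x, y` there is a point equidistant from `0, hx, ky`: the two
equations say that `C` projects to the midpoints of the segments from `0` to `hx` and `ky`. -/
lemma exists_center {E : Type*} [NormedAddCommGroup E] [InnerProductSpace ℝ E]
    (x y : E) (h k : ℝ) (hx : ⟪x, x⟫ = (1 : ℝ)) (hy : ⟪y, y⟫ = (1 : ℝ))
    (hxy : ⟪x, y⟫ ^ 2 ≠ (1 : ℝ)) : ∃ C : E, 2 * ⟪C, x⟫ = h ∧ 2 * ⟪C, y⟫ = k := by
  have hd : 1 - ⟪x, y⟫ ^ 2 ≠ (0 : ℝ) := fun h0 => hxy (by linarith)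
  -- The coefficients solve the 2 × 2 Gram system by Cramer's rule.
  refine ⟨((h - ⟪x, y⟫ * k) / (2 * (1 - ⟪x, y⟫ ^ 2))) • x
    + ((k - ⟪x, y⟫ * h) / (2 * (1 - ⟪x, y⟫ ^ 2))) • y, ?_, ?_⟩
  · rw [inner_add_left, real_inner_smul_left, real_inner_smul_left, hx, real_inner_comm x y]
    field_simp
    ring
  · rw [inner_add_left, real_inner_smul_left, real_inner_smul_left, hy]
    field_simp
    ring

/-- for a curvature lattice (normalized tangent vectors, direct and adjoint
linear systems, curvature condition `2X·Y + p + q = 0`), the four vertices of a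
non-degenerate lattice quadrilateral are concyclic (coplanar and on a common sphere). -/
theorem stmt_2 (X Y : ℤ × ℤ → EuclideanSpace ℝ (Fin 3)) (H K p q Γ : ℤ × ℤ → ℝ)
    (hΓ : ∀ n, Γ n ^ 2 = 1 - p n * q n) (hΓ0 : ∀ n, Γ n ≠ 0)
    (hX : ∀ n, X (s2 n) = (Γ n)⁻¹ • (X n + q n • Y n))
    (hY : ∀ n, Y (s1 n) = (Γ n)⁻¹ • (Y n + p n • X n))
    (hH : ∀ n, H (s2 n) = (Γ n)⁻¹ * (H n + p n * K n))
    (hK : ∀ n, K (s1 n) = (Γ n)⁻¹ * (K n + q n * H n))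
    (hXu : ∀ n, ⟪X n, X n⟫ = (1 : ℝ)) (hYu : ∀ n, ⟪Y n, Y n⟫ = (1 : ℝ))
    (hcurv : ∀ n, 2 * ⟪X n, Y n⟫ + p n + q n = 0)
    (n₀ : ℤ × ℤ) (hXY : ⟪X n₀, Y n₀⟫ ^ 2 ≠ 1)
    (hH0 : H n₀ ≠ 0) (hK0 : K n₀ ≠ 0) (hH2 : H (s2 n₀) ≠ 0) (hK1 : K (s1 n₀) ≠ 0)
    (R : EuclideanSpace ℝ (Fin 3)) :
    EuclideanGeometry.Concyclic
      ({R, R + H n₀ • X n₀, R + K n₀ • Y n₀,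
        R + K n₀ • Y n₀ + H (s2 n₀) • X (s2 n₀)} : Set (EuclideanSpace ℝ (Fin 3))) := by
  have hg := hΓ n₀
  have hg0 := hΓ0 n₀
  have hc := hcurv n₀
  have hx := hXu n₀
  have hy := hYu n₀
  rw [hX, hH]
  obtain ⟨C, hCx, hCy⟩ := exists_center (X n₀) (Y n₀) (H n₀) (K n₀) hx hy hXY
  generalize X n₀ = x at *
  generalize Y n₀ = y at *
  generalize H n₀ = h at *
  generalize K n₀ = k at *
  generalize p n₀ = p at *
  generalize q n₀ = q at *
  generalize Γ n₀ = g at *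
  have hV : k • y + (g⁻¹ * (h + p * k)) • g⁻¹ • (x + q • y)
      = ((h + p * k) / g ^ 2) • x + ((k + q * h) / g ^ 2) • y := by
    -- The `y`-coefficient simplifies because `k Γ² + p q k = k`.
    have hβ : (k + q * h) / g ^ 2 = k + (h + p * k) / g ^ 2 * q := by
      field_simp
      rw [hg]
      ring
    have hα : g⁻¹ * (h + p * k) * g⁻¹ = (h + p * k) / g ^ 2 := by
      field_simp
    rw [smul_smul, hα, hβ]
    module
  rw [add_assoc, hV]
  constructor
  · refine ⟨R + C, ‖C‖, ?_⟩
    have hxy : ⟪y, x⟫ = ⟪x, y⟫ := real_inner_comm x y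
    rintro v (rfl | rfl | rfl | rfl)
    · simp
    · apply dist_add_center_eq
      simp only [real_inner_smul_left, real_inner_smul_right, hx]
      linear_combination (-h) * hCx
    · apply dist_add_center_eq
      simp only [real_inner_smul_left, real_inner_smul_right, hy]
      linear_combination (-k) * hCy
    · apply dist_add_center_eq
      simp only [inner_add_left, inner_add_right, real_inner_smul_left, real_inner_smul_right,
        hx, hy, hxy]
      have e : ⟪x, y⟫ = -(p + q) / 2 := by linarith
      have e1 : ⟪C, x⟫ = h / 2 := by linarith
      have e2 : ⟪C, y⟫ = k / 2 := by linarith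
      rw [e, e1, e2]
      field_simp
      rw [hg]
      ring
  · apply coplanar_of_sub_mem_span_pair R x y
    rintro v (rfl | rfl | rfl | rfl) <;> rw [Submodule.mem_span_pair]
    · exact ⟨0, 0, by simp⟩
    · exact ⟨h, 0, by simp⟩
    · exact ⟨0, k, by simp⟩
    · exact ⟨_, _, (add_sub_cancel_left _ _).symm⟩
end
end

section
/- Let X, Y : ℤ² → ℝ³ with ‖X‖² = 1, ‖Y‖² = 1, and p, q, Γ : ℤ² → ℝ with Γ² = 1 − pq and Γ > 0 at every lattice point, satisfy X₍₂₎ = (X + qY)/Γ. Then for any scalar functions H, K : ℤ² → ℝ, at every lattice point the cross-product norm ‖(Y·K) × (Y·K + X₍₂₎·H₍₂₎)‖ equals |H₍₂₎·K|·√(1 − (X·Y)²)/Γ. (Geometrically: twice the area of the triangle with vertices R, R₍₂₎ = R + Y·K and R₍₁₂₎ = R + Y·K + X₍₂₎·H₍₂₎ of a curvature lattice equals |H₍₂₎K|·√(1 − (X·Y)²)/Γ.) -/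
/-!
Substituting `X₍₂₎ = (X + qY)/Γ`, every multiple of `Y` in the second factor is killed by
the cross product with `Y`, so the cross product is `(H₍₂₎K/Γ) • (Y × X)`. Its norm follows
from homogeneity (`enorm3_smul`, with `Γ > 0`) and Lagrange's identity for the unit vectors
`X`, `Y` (`enorm3_cross_of_unit`).
-/

noncomputable section

open Matrix

/-- Euclidean norm on ℝ³ (as `Fin 3 → ℝ`). -/
def enorm3 (u : Fin 3 → ℝ) : ℝ := Real.sqrt (dot3 u u)

/-- Absolute homogeneity of the Euclidean norm. -/
theorem enorm3_smul (c : ℝ) (u : Fin 3 → ℝ) : enorm3 (c • u) = |c| * enorm3 u := by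
  have h : dot3 (c • u) (c • u) = c ^ 2 * dot3 u u := by
    simp only [dot3, Fin.sum_univ_three, Pi.smul_apply, smul_eq_mul]
    ring
  rw [enorm3, h, Real.sqrt_mul (sq_nonneg c), Real.sqrt_sq_eq_abs, enorm3]

/-- Lagrange's identity `‖y × x‖² = ‖x‖²‖y‖² - (x·y)²`, specialised to unit vectors. -/
theorem enorm3_cross_of_unit {x y : Fin 3 → ℝ} (hx : dot3 x x = 1) (hy : dot3 y y = 1) :
    enorm3 (crossProduct y x) = Real.sqrt (1 - dot3 x y ^ 2) := by
  have h : dot3 (crossProduct y x) (crossProduct y x) =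
      dot3 x x * dot3 y y - dot3 x y ^ 2 := by
    simp only [dot3, Fin.sum_univ_three, cross_apply, Matrix.cons_val]
    ring
  rw [enorm3, h, hx, hy, one_mul]

/-- twice the area of the `upper' triangle `(R, R₍₂₎, R₍₁₂₎)` of a curvature
lattice quadrilateral equals `|H₍₂₎K|·√(1 − (X·Y)²)/Γ`. -/
theorem stmt_3 (X Y : ℤ × ℤ → Fin 3 → ℝ) (p q Γ H K : ℤ × ℤ → ℝ)
    (hXu : ∀ n, dot3 (X n) (X n) = 1) (hYu : ∀ n, dot3 (Y n) (Y n) = 1)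
    (hΓ : ∀ n, Γ n ^ 2 = 1 - p n * q n) (hΓpos : ∀ n, 0 < Γ n)
    (hX : ∀ n, X (s2 n) = (Γ n)⁻¹ • (X n + q n • Y n)) :
    ∀ n, enorm3 (crossProduct (K n • Y n) (K n • Y n + H (s2 n) • X (s2 n))) =
      |H (s2 n) * K n| * Real.sqrt (1 - dot3 (X n) (Y n) ^ 2) / Γ n := by
  intro n
  have hcross : crossProduct (K n • Y n) (K n • Y n + H (s2 n) • X (s2 n)) =
      (H (s2 n) * K n / Γ n) • crossProduct (Y n) (X n) := by
    rw [hX n]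
    simp only [map_add, map_smul, LinearMap.smul_apply, cross_self, smul_zero, zero_add,
      add_zero, smul_smul]
    congr 1
    ring
  rw [hcross, enorm3_smul, enorm3_cross_of_unit (hXu n) (hYu n), abs_div,
    abs_of_pos (hΓpos n)]
  ring
end
end

section
/- Let p, q, Γ : ℤ² → ℝ with Γ² = 1 − pq and Γ ≠ 0 at every lattice point, and let both scalar pairs (H, K) and (H°, K°) satisfy the adjoint linear system H₍₂₎ = (H + pK)/Γ, K₍₁₎ = (K + qH)/Γ, H°₍₂₎ = (H° + pK°)/Γ, K°₍₁₎ = (K° + qH°)/Γ. Then at every lattice point (H°₍₂₎K° + K°₍₁₎H°)·(H₍₂₎K₍₁₎ + HK) = (H°₍₂₎K°₍₁₎ + H°K°)·(H₍₂₎K + K₍₁₎H). In particular, the two expressions (H°₍₂₎K° + K°₍₁₎H°)/(H₍₂₎K + K₍₁₎H) and (H°₍₂₎K°₍₁₎ + H°K°)/(H₍₂₎K₍₁₎ + HK) for the discrete Gaußian curvature coincide wherever the denominators are nonzero. -/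
/-! For a solution of the adjoint system, put `Q = 2HK + pK² + qH²`. The system gives
`Γ (H₍₂₎K + K₍₁₎H) = Q`, and `Γ² = 1 - pq` gives `Γ² (H₍₂₎K₍₁₎ + HK) = Q`. Hence
`H₍₂₎K + K₍₁₎H = Γ (H₍₂₎K₍₁₎ + HK)` (`adjoint_key`) with a factor `Γ` that does not depend on
the solution, so it cancels between `(H, K)` and `(H°, K°)`. -/

noncomputable section

/-- The solution-independent proportionality at one lattice point, where `h2`, `k1` stand for
the shifted values `H₍₂₎`, `K₍₁₎`. -/
theorem adjoint_key {p q g h k h2 k1 : ℝ} (hg : g ^ 2 = 1 - p * q) (hg0 : g ≠ 0)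
    (hh : h2 = g⁻¹ * (h + p * k)) (hk : k1 = g⁻¹ * (k + q * h)) :
    h2 * k + k1 * h = g * (h2 * k1 + h * k) := by
  subst hh hk
  field_simp
  linear_combination (-h * k) * hg

/-- the two expressions for the discrete Gaußian curvature coincide:
`(H°₍₂₎K° + K°₍₁₎H°)(H₍₂₎K₍₁₎ + HK) = (H°₍₂₎K°₍₁₎ + H°K°)(H₍₂₎K + K₍₁₎H)` for any two
solutions `(H,K)`, `(H°,K°)` of the adjoint linear system. -/
theorem stmt_4 (p q Γ H K Ho Ko : ℤ × ℤ → ℝ)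
    (hΓ : ∀ n, Γ n ^ 2 = 1 - p n * q n) (hΓ0 : ∀ n, Γ n ≠ 0)
    (hH : ∀ n, H (s2 n) = (Γ n)⁻¹ * (H n + p n * K n))
    (hK : ∀ n, K (s1 n) = (Γ n)⁻¹ * (K n + q n * H n))
    (hHo : ∀ n, Ho (s2 n) = (Γ n)⁻¹ * (Ho n + p n * Ko n))
    (hKo : ∀ n, Ko (s1 n) = (Γ n)⁻¹ * (Ko n + q n * Ho n)) :
    ∀ n, (Ho (s2 n) * Ko n + Ko (s1 n) * Ho n) * (H (s2 n) * K (s1 n) + H n * K n) =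
        (Ho (s2 n) * Ko (s1 n) + Ho n * Ko n) * (H (s2 n) * K n + K (s1 n) * H n) ∧
      (H (s2 n) * K n + K (s1 n) * H n ≠ 0 → H (s2 n) * K (s1 n) + H n * K n ≠ 0 →
        (Ho (s2 n) * Ko n + Ko (s1 n) * Ho n) / (H (s2 n) * K n + K (s1 n) * H n) =
          (Ho (s2 n) * Ko (s1 n) + Ho n * Ko n) / (H (s2 n) * K (s1 n) + H n * K n)) := by
  intro n
  have h := adjoint_key (hΓ n) (hΓ0 n) (hH n) (hK n)
  have ho := adjoint_key (hΓ n) (hΓ0 n) (hHo n) (hKo n)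
  have key : (Ho (s2 n) * Ko n + Ko (s1 n) * Ho n) * (H (s2 n) * K (s1 n) + H n * K n) =
      (Ho (s2 n) * Ko (s1 n) + Ho n * Ko n) * (H (s2 n) * K n + K (s1 n) * H n) := by
    rw [h, ho]
    ring
  exact ⟨key, fun h₁ h₂ => (div_eq_div_iff h₁ h₂).2 key⟩
end
end

section
/- Let p, q, Γ : ℤ² → ℝ with Γ² = 1 − pq and Γ ≠ 0 at every lattice point, and let H₁, H₂, K₁, K₂ : ℤ² → ℝ satisfy componentwise the adjoint linear system Hᵢ₍₂₎ = (Hᵢ + pKᵢ)/Γ, Kᵢ₍₁₎ = (Kᵢ + qHᵢ)/Γ for i = 1, 2. Endow ℝ² with the symmetric bilinear form ⟨u, v⟩ = u₁v₂ + u₂v₁ and suppose the dual discrete orthogonality condition 2⟨(H₁,H₂),(K₁,K₂)⟩ + p⟨(K₁,K₂),(K₁,K₂)⟩ + q⟨(H₁,H₂),(H₁,H₂)⟩ = 0 holds at every lattice point. Then H₁₍₂₎H₂₍₂₎ = H₁H₂ and K₁₍₁₎K₂₍₁₎ = K₁K₂ at every lattice point; i.e., the product H₁H₂ is independent of n₂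 and the product K₁K₂ is independent of n₁. -/
noncomputable section

/-- The symmetric bilinear form `⟨u, v⟩ = u₁v₂ + u₂v₁` on ℝ². -/
def form2 (u v : ℝ × ℝ) : ℝ := u.1 * v.2 + u.2 * v.1

/-- for dual data `(H₁,H₂), (K₁,K₂)` satisfying the adjoint system and the
dual discrete orthogonality condition w.r.t. the form `⟨u,v⟩ = u₁v₂ + u₂v₁`, the products
`H₁H₂` and `K₁K₂` are independent of `n₂` and `n₁` respectively. -/
theorem stmt_5 (p q Γ H₁ H₂ K₁ K₂ : ℤ × ℤ → ℝ)
    (hΓ : ∀ n, Γ n ^ 2 = 1 - p n * q n) (hΓ0 : ∀ n, Γ n ≠ 0)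
    (hH₁ : ∀ n, H₁ (s2 n) = (Γ n)⁻¹ * (H₁ n + p n * K₁ n))
    (hK₁ : ∀ n, K₁ (s1 n) = (Γ n)⁻¹ * (K₁ n + q n * H₁ n))
    (hH₂ : ∀ n, H₂ (s2 n) = (Γ n)⁻¹ * (H₂ n + p n * K₂ n))
    (hK₂ : ∀ n, K₂ (s1 n) = (Γ n)⁻¹ * (K₂ n + q n * H₂ n))
    (horth : ∀ n, 2 * form2 (H₁ n, H₂ n) (K₁ n, K₂ n) +
        p n * form2 (K₁ n, K₂ n) (K₁ n, K₂ n) +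
        q n * form2 (H₁ n, H₂ n) (H₁ n, H₂ n) = 0) :
    ∀ n, H₁ (s2 n) * H₂ (s2 n) = H₁ n * H₂ n ∧ K₁ (s1 n) * K₂ (s1 n) = K₁ n * K₂ n := by
  intro n
  have h := horth n
  simp only [form2] at h
  have h0 := hΓ0 n
  have hG := hΓ n
  rw [hH₁, hH₂, hK₁, hK₂]
  -- The shifted product times `Γ²` is `H₁H₂ + p (H₁K₂ + H₂K₁ + p K₁K₂)`, and orthogonality
  -- replaces the bracket by `-q H₁H₂`, leaving `(1 - pq) H₁H₂`; symmetrically for `K₁K₂`.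
  constructor
  · field_simp
    linear_combination (p n / 2) * h - H₁ n * H₂ n * hG
  · field_simp
    linear_combination (q n / 2) * h - K₁ n * K₂ n * hG
end
end

section
/- Let H₁, K₁ : ℤ² → ℝ be nowhere-vanishing functions (so also H₁₍₂₎ ≠ 0, K₁₍₁₎ ≠ 0), let α : ℤ² → ℝ depend only on n₁ and β : ℤ² → ℝ depend only on n₂, and define H₂ = α/H₁, K₂ = −β/K₁. If at a lattice point the condition H₁₍₂₎K₂ + K₁₍₁₎H₂ + H₂₍₂₎K₁ + K₂₍₁₎H₁ = 0 holds, then at that point (β·H₁₍₂₎·H₁ − α·K₁₍₁₎·K₁)·(K₁₍₁₎·H₁₍₂₎ + H₁·K₁) = 0. -/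
noncomputable section

/-- with `H₂ = α/H₁`, `K₂ = −β/K₁` (α depending only on n₁, β only on n₂),
the condition `H₁₍₂₎K₂ + K₁₍₁₎H₂ + H₂₍₂₎K₁ + K₂₍₁₎H₁ = 0` implies
`(βH₁₍₂₎H₁ − αK₁₍₁₎K₁)(K₁₍₁₎H₁₍₂₎ + H₁K₁) = 0`. -/
theorem stmt_6 (H₁ K₁ α β H₂ K₂ : ℤ × ℤ → ℝ)
    (hH₁0 : ∀ n, H₁ n ≠ 0) (hK₁0 : ∀ n, K₁ n ≠ 0)
    (hα : ∀ n, α (s2 n) = α n) (hβ : ∀ n, β (s1 n) = β n)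
    (hH₂ : ∀ n, H₂ n = α n / H₁ n) (hK₂ : ∀ n, K₂ n = -β n / K₁ n)
    (n : ℤ × ℤ)
    (hcond : H₁ (s2 n) * K₂ n + K₁ (s1 n) * H₂ n + H₂ (s2 n) * K₁ n + K₂ (s1 n) * H₁ n = 0) :
    (β n * H₁ (s2 n) * H₁ n - α n * K₁ (s1 n) * K₁ n) *
      (K₁ (s1 n) * H₁ (s2 n) + H₁ n * K₁ n) = 0 := by
  have h := hH₁0 n
  have h' := hH₁0 (s2 n)
  have k := hK₁0 n
  have k' := hK₁0 (s1 n)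
  rw [hK₂, hH₂, hH₂, hK₂, hα, hβ] at hcond
  -- The goal is the condition multiplied by `-H₁ H₁₍₂₎ K₁ K₁₍₁₎`, which clears all denominators.
  rw [← mul_zero (-(H₁ n * H₁ (s2 n) * K₁ n * K₁ (s1 n))), ← hcond]
  field_simp
  ring
end
end

section
/- Let H₁, K₁ : ℤ² → ℝ be nowhere-vanishing, let α : ℤ² → ℝ depend only on n₁ with α ≠ 0 and β : ℤ² → ℝ depend only on n₂ with β ≠ 0, and define H₂ = α/H₁, K₂ = −β/K₁. Suppose at a lattice point H₁₍₂₎K₂ + K₁₍₁₎H₂ + H₂₍₂₎K₁ + K₂₍₁₎H₁ = 0 and the quadrilateral is non-degenerate in the sense that K₁₍₁₎·H₁₍₂₎ + H₁·K₁ ≠ 0. Then at that point β·H₁₍₂₎·H₁ = α·K₁₍₁₎·K₁ and also β·H₂₍₂₎·H₂ = α·K₂₍₁₎·K₂; that is, both lattices satisfy the discrete isothermic cross-ratio condition H₍₂₎H/(K₍₁₎K) = α/β. -/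
/-!
Substituting `H₂ = α/H₁`, `K₂ = -β/K₁` and using `α₍₂₎ = α`, `β₍₁₎ = β`, the orthogonality
condition factors as
`(K₁₍₁₎ H₁₍₂₎ + H₁ K₁) * (α / (H₁ H₁₍₂₎) - β / (K₁ K₁₍₁₎)) = 0`.
The first factor is nonzero by non-degeneracy, so `β H₁₍₂₎ H₁ = α K₁₍₁₎ K₁`. The condition for the
second lattice is `β α² / (H₁₍₂₎ H₁) = α β² / (K₁₍₁₎ K₁)`, the same identity after clearing
denominators; the two quotient forms follow by division.
-/

noncomputable section

/-- with `H₂ = α/H₁`, `K₂ = −β/K₁`, the orthogonality condition together with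
non-degeneracy `K₁₍₁₎H₁₍₂₎ + H₁K₁ ≠ 0` yields the discrete isothermic cross-ratio
conditions `βH₁₍₂₎H₁ = αK₁₍₁₎K₁` and `βH₂₍₂₎H₂ = αK₂₍₁₎K₂`, i.e.
`H₍₂₎H/(K₍₁₎K) = α/β` for both lattices. -/
theorem stmt_7 (H₁ K₁ α β H₂ K₂ : ℤ × ℤ → ℝ)
    (hH₁0 : ∀ n, H₁ n ≠ 0) (hK₁0 : ∀ n, K₁ n ≠ 0)
    (hα : ∀ n, α (s2 n) = α n) (hβ : ∀ n, β (s1 n) = β n)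
    (hα0 : ∀ n, α n ≠ 0) (hβ0 : ∀ n, β n ≠ 0)
    (hH₂ : ∀ n, H₂ n = α n / H₁ n) (hK₂ : ∀ n, K₂ n = -β n / K₁ n)
    (n : ℤ × ℤ)
    (hcond : H₁ (s2 n) * K₂ n + K₁ (s1 n) * H₂ n + H₂ (s2 n) * K₁ n + K₂ (s1 n) * H₁ n = 0)
    (hnd : K₁ (s1 n) * H₁ (s2 n) + H₁ n * K₁ n ≠ 0) :
    β n * (H₁ (s2 n) * H₁ n) = α n * (K₁ (s1 n) * K₁ n) ∧
      β n * (H₂ (s2 n) * H₂ n) = α n * (K₂ (s1 n) * K₂ n) ∧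
      H₁ (s2 n) * H₁ n / (K₁ (s1 n) * K₁ n) = α n / β n ∧
      H₂ (s2 n) * H₂ n / (K₂ (s1 n) * K₂ n) = α n / β n := by
  have hh := hH₁0 n
  have hh' := hH₁0 (s2 n)
  have hk := hK₁0 n
  have hk' := hK₁0 (s1 n)
  have ha := hα0 n
  have hb := hβ0 n
  simp only [hH₂, hK₂, hα, hβ] at hcond ⊢
  have key : β n * (H₁ (s2 n) * H₁ n) = α n * (K₁ (s1 n) * K₁ n) := by
    -- The non-degenerate factor splits off the orthogonality condition.
    apply mul_left_cancel₀ hnd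
    field_simp at hcond
    linear_combination -hcond
  have key₂ : β n * (α n / H₁ (s2 n) * (α n / H₁ n)) =
      α n * (-β n / K₁ (s1 n) * (-β n / K₁ n)) := by
    field_simp
    linear_combination -key
  refine ⟨key, key₂, ?_, ?_⟩
  · rw [div_eq_div_iff (mul_ne_zero hk' hk) hb]
    linear_combination key
  · have hK₂0 : -β n / K₁ (s1 n) * (-β n / K₁ n) ≠ 0 :=
      mul_ne_zero (div_ne_zero (neg_ne_zero.mpr hb) hk') (div_ne_zero (neg_ne_zero.mpr hb) hk)
    rw [div_eq_div_iff hK₂0 hb]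
    linear_combination key₂
end
end

section
/- Let H₁, K₁, H₂, K₂ : ℤ² → ℝ satisfy at every lattice point the condition H₁₍₂₎K₂ + K₁₍₁₎H₂ + H₂₍₂₎K₁ + K₂₍₁₎H₁ = 0, and set H° = (H₂ − H₁)/2, K° = (K₂ − K₁)/2, H₊ = (H₂ + H₁)/2, K₊ = (K₂ + K₁)/2. Then at every lattice point: (a) H°₍₂₎K₁ + K₁₍₁₎H° + H₁₍₂₎K° + K°₍₁₎H₁ = −(H₁₍₂₎K₁ + K₁₍₁₎H₁), so the lattice Σ₁ has discrete mean curvature 𝖬₁ = 1 with respect to the spherical representation with data (H°, K°) wherever H₁₍₂₎K₁ + K₁₍₁₎H₁ ≠ 0; (b) H°₍₂₎K₂ + K₂₍₁₎H° + H₂₍₂₎K° + K°₍₁₎H₂ = H₂₍₂₎K₂ + K₂₍₁₎H₂, so Σ₂ has discrete mean curvature 𝖬₂ = −1; (c) H°₍₂₎K° + K°₍₁₎H° = H₊₍₂₎K₊ + K₊₍₁₎H₊, so Σ₊ has discrete Gaußian curvature 𝖪₊ = 1 (discrete Bonnet theorem). -/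
noncomputable section

/-- discrete Bonnet theorem: with `H° = (H₂−H₁)/2`, `K° = (K₂−K₁)/2`,
`H₊ = (H₂+H₁)/2`, `K₊ = (K₂+K₁)/2` and the Christoffel condition, the lattices `Σ₁`, `Σ₂`
have discrete mean curvatures `𝖬₁ = 1`, `𝖬₂ = −1` and `Σ₊` has discrete Gaußian
curvature `𝖪₊ = 1` with respect to the spherical representation data `(H°, K°)`. -/
theorem stmt_9 (H₁ K₁ H₂ K₂ Ho Ko Hp Kp : ℤ × ℤ → ℝ)
    (hcond : ∀ n,
      H₁ (s2 n) * K₂ n + K₁ (s1 n) * H₂ n + H₂ (s2 n) * K₁ n + K₂ (s1 n) * H₁ n = 0)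
    (hHo : ∀ n, Ho n = (H₂ n - H₁ n) / 2) (hKo : ∀ n, Ko n = (K₂ n - K₁ n) / 2)
    (hHp : ∀ n, Hp n = (H₂ n + H₁ n) / 2) (hKp : ∀ n, Kp n = (K₂ n + K₁ n) / 2) :
    ∀ n,
      (Ho (s2 n) * K₁ n + K₁ (s1 n) * Ho n + H₁ (s2 n) * Ko n + Ko (s1 n) * H₁ n =
          -(H₁ (s2 n) * K₁ n + K₁ (s1 n) * H₁ n)) ∧
      (H₁ (s2 n) * K₁ n + K₁ (s1 n) * H₁ n ≠ 0 →
        -((Ho (s2 n) * K₁ n + K₁ (s1 n) * Ho n + H₁ (s2 n) * Ko n + Ko (s1 n) * H₁ n) /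
            (H₁ (s2 n) * K₁ n + K₁ (s1 n) * H₁ n)) = 1) ∧
      (Ho (s2 n) * K₂ n + K₂ (s1 n) * Ho n + H₂ (s2 n) * Ko n + Ko (s1 n) * H₂ n =
          H₂ (s2 n) * K₂ n + K₂ (s1 n) * H₂ n) ∧
      (H₂ (s2 n) * K₂ n + K₂ (s1 n) * H₂ n ≠ 0 →
        -((Ho (s2 n) * K₂ n + K₂ (s1 n) * Ho n + H₂ (s2 n) * Ko n + Ko (s1 n) * H₂ n) /
            (H₂ (s2 n) * K₂ n + K₂ (s1 n) * H₂ n)) = -1) ∧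
      (Ho (s2 n) * Ko n + Ko (s1 n) * Ho n = Hp (s2 n) * Kp n + Kp (s1 n) * Hp n) ∧
      (Hp (s2 n) * Kp n + Kp (s1 n) * Hp n ≠ 0 →
        (Ho (s2 n) * Ko n + Ko (s1 n) * Ho n) /
            (Hp (s2 n) * Kp n + Kp (s1 n) * Hp n) = 1) := by
  intro n
  have h := hcond n
  -- Writing `⟨i, j⟩` for the polarized form `Hᵢ₍₂₎Kⱼ + Kᵢ₍₁₎Hⱼ`, the hypothesis reads
  -- `⟨1, 2⟩ + ⟨2, 1⟩ = 0`; each identity follows by expanding `∘ = (2 - 1) / 2`, `+ = (2 + 1) / 2`.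
  have ha : Ho (s2 n) * K₁ n + K₁ (s1 n) * Ho n + H₁ (s2 n) * Ko n + Ko (s1 n) * H₁ n =
      -(H₁ (s2 n) * K₁ n + K₁ (s1 n) * H₁ n) := by
    simp only [hHo, hKo]
    linear_combination h / 2
  have hb : Ho (s2 n) * K₂ n + K₂ (s1 n) * Ho n + H₂ (s2 n) * Ko n + Ko (s1 n) * H₂ n =
      H₂ (s2 n) * K₂ n + K₂ (s1 n) * H₂ n := by
    simp only [hHo, hKo]
    linear_combination -h / 2
  have hc : Ho (s2 n) * Ko n + Ko (s1 n) * Ho n = Hp (s2 n) * Kp n + Kp (s1 n) * Hp n := by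
    simp only [hHo, hKo, hHp, hKp]
    linear_combination -h / 2
  refine ⟨ha, fun h0 => ?_, hb, fun h0 => ?_, hc, fun h0 => ?_⟩
  · rw [ha, neg_div, neg_neg, div_self h0]
  · rw [hb, div_self h0]
  · rw [hc, div_self h0]
end
end

section
/- Let X, Y : ℤ² → ℝ³ with ‖X‖² = 1, ‖Y‖² = 1 and p, q, Γ : ℤ² → ℝ with Γ² = 1 − pq, Γ ≠ 0 at every lattice point, satisfying the direct linear system X₍₂₎ = (X + qY)/Γ, Y₍₁₎ = (Y + pX)/Γ. (a) If p = q and X·Y + p = 0 at a lattice point, then X₍₂₎·Y = 0 and Y₍₁₎·X = 0 at that point. (b) If p = −q and X·Y = 0 at a lattice point, then X₍₂₎·Y₍₁₎ = 0 at that point. (These are the characterizations of discrete Petot surfaces: two right angles in each quadrilateral.) -/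
noncomputable section

/-- discrete Petot surfaces: (a) if `p = q` and `X·Y + p = 0` at a point,
then `X₍₂₎·Y = 0` and `Y₍₁₎·X = 0` there; (b) if `p = −q` and `X·Y = 0` at a point, then
`X₍₂₎·Y₍₁₎ = 0` there. -/
theorem stmt_10 (X Y : ℤ × ℤ → Fin 3 → ℝ) (p q Γ : ℤ × ℤ → ℝ)
    (hXu : ∀ n, dot3 (X n) (X n) = 1) (hYu : ∀ n, dot3 (Y n) (Y n) = 1)
    (hΓ : ∀ n, Γ n ^ 2 = 1 - p n * q n) (hΓ0 : ∀ n, Γ n ≠ 0)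
    (hX : ∀ n, X (s2 n) = (Γ n)⁻¹ • (X n + q n • Y n))
    (hY : ∀ n, Y (s1 n) = (Γ n)⁻¹ • (Y n + p n • X n)) :
    ∀ n, (p n = q n → dot3 (X n) (Y n) + p n = 0 →
        dot3 (X (s2 n)) (Y n) = 0 ∧ dot3 (Y (s1 n)) (X n) = 0) ∧
      (p n = -q n → dot3 (X n) (Y n) = 0 → dot3 (X (s2 n)) (Y (s1 n)) = 0) := by
  intro n
  have hx := hXu n
  have hy := hYu n
  rw [hX n, hY n]
  simp only [dot3, Fin.sum_univ_three, Pi.smul_apply, Pi.add_apply, smul_eq_mul] at hx hy ⊢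
  refine ⟨fun hpq h => ⟨?_, ?_⟩, fun hpq h => ?_⟩
  -- Bilinearity and `‖Y‖² = 1` give `X₍₂₎·Y = Γ⁻¹ (X·Y + q)`.
  · linear_combination (Γ n)⁻¹ * h + (Γ n)⁻¹ * q n * hy - (Γ n)⁻¹ * hpq
  -- Bilinearity and `‖X‖² = 1` give `Y₍₁₎·X = Γ⁻¹ (X·Y + p)`.
  · linear_combination (Γ n)⁻¹ * h + (Γ n)⁻¹ * p n * hx
  -- Here `X₍₂₎·Y₍₁₎ = Γ⁻² ((1 + p q) X·Y + p + q)`.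
  · linear_combination (Γ n)⁻¹ ^ 2 * ((1 + p n * q n) * h + p n * hx + q n * hy + hpq)
end
end

section
/- Let X, Y, H, K, p, q, Γ : ℤ² → ℝ satisfy Γ² = 1 − pq, Γ ≠ 0 at every lattice point, together with the scalar linear systems X₍₂₎ = (X + qY)/Γ, Y₍₁₎ = (Y + pX)/Γ, H₍₂₎ = (H + pK)/Γ, K₍₁₎ = (K + qH)/Γ, and let M : ℤ² → ℝ satisfy M₍₁₎ − M = X·H and M₍₂₎ − M = Y·K. Then at every lattice point M₍₁₎·M₍₂₎ − (p·M − Y·H)·(q·M − X·K) = M·M₍₁₂₎·(1 − pq), where M₍₁₂₎(n₁,n₂) = M(n₁+1,n₂+1). Equivalently, the transformed coefficients p' = (M/√(M₍₁₎M₍₂₎))(p − YH/M), q' = (M/√(M₍₁₎M₍₂₎))(q − XK/M) satisfy 1 − p'q' = (M·M₍₁₂₎/(M₍₁₎·M₍₂₎))·(1 − pq) wherever M, M₍₁₎, M₍₂₎ > 0. -/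
/-!
Going around an elementary square, `M₍₁₂₎ = M + XH + Y₍₁₎K₍₁₎`, and the linear systems for `Y` and `K`
turn the last product into `(Y + pX)(K + qH)/Γ²`. Since `Γ² = 1 - pq`, multiplying by `1 - pq` makes
`M₍₁₂₎(1 - pq)` polynomial in the data at `n`, and the first identity is then a ring identity
(the terms `XHYK` cancel). Dividing by `M₍₁₎M₍₂₎`, the square of the normalising root, gives
the second form.
-/

noncomputable section

/-- Double shift: `f₍₁₂₎(n₁,n₂) = f(n₁+1,n₂+1)`. -/
def s12 (n : ℤ × ℤ) : ℤ × ℤ := (n.1 + 1, n.2 + 1)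

/-- the identity
`M₍₁₎M₍₂₎ − (pM − YH)(qM − XK) = M·M₍₁₂₎·(1 − pq)`, equivalently
`1 − p'q' = (M·M₍₁₂₎/(M₍₁₎M₍₂₎))(1 − pq)` for the transformed coefficients `p'`, `q'`
wherever `M, M₍₁₎, M₍₂₎ > 0`. -/
theorem stmt_11 (X Y H K p q Γ M : ℤ × ℤ → ℝ)
    (hΓ : ∀ n, Γ n ^ 2 = 1 - p n * q n) (hΓ0 : ∀ n, Γ n ≠ 0)
    (hX : ∀ n, X (s2 n) = (Γ n)⁻¹ * (X n + q n * Y n))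
    (hY : ∀ n, Y (s1 n) = (Γ n)⁻¹ * (Y n + p n * X n))
    (hH : ∀ n, H (s2 n) = (Γ n)⁻¹ * (H n + p n * K n))
    (hK : ∀ n, K (s1 n) = (Γ n)⁻¹ * (K n + q n * H n))
    (hM1 : ∀ n, M (s1 n) - M n = X n * H n)
    (hM2 : ∀ n, M (s2 n) - M n = Y n * K n) :
    ∀ n, M (s1 n) * M (s2 n) - (p n * M n - Y n * H n) * (q n * M n - X n * K n) =
        M n * M (s12 n) * (1 - p n * q n) ∧
      (0 < M n → 0 < M (s1 n) → 0 < M (s2 n) →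
        1 - (M n / Real.sqrt (M (s1 n) * M (s2 n)) * (p n - Y n * H n / M n)) *
            (M n / Real.sqrt (M (s1 n) * M (s2 n)) * (q n - X n * K n / M n)) =
          M n * M (s12 n) / (M (s1 n) * M (s2 n)) * (1 - p n * q n)) := by
  intro n
  have hγ := hΓ0 n
  -- One plaquette step along `n → s1 n → s12 n`, cleared of the denominator `Γ² = 1 - pq`.
  have h12 : M (s12 n) * (1 - p n * q n) =
      (1 - p n * q n) * (M n + X n * H n) + (Y n + p n * X n) * (K n + q n * H n) := by
    have h : M (s12 n) - M (s1 n) = Y (s1 n) * K (s1 n) := hM2 (s1 n)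
    rw [hY, hK] at h
    have h' : M (s12 n) = M n + X n * H n +
        (Γ n)⁻¹ * (Y n + p n * X n) * ((Γ n)⁻¹ * (K n + q n * H n)) := by
      linarith [hM1 n]
    rw [h', ← hΓ n]
    field_simp
  have key : M (s1 n) * M (s2 n) - (p n * M n - Y n * H n) * (q n * M n - X n * K n) =
      M n * M (s12 n) * (1 - p n * q n) := by
    rw [mul_assoc, h12, eq_add_of_sub_eq (hM1 n), eq_add_of_sub_eq (hM2 n)]
    ring
  refine ⟨key, fun h0 h1 h2 => ?_⟩
  have hpos : 0 < M (s1 n) * M (s2 n) := mul_pos h1 h2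
  have hS := Real.mul_self_sqrt hpos.le
  have hprod : (M n / Real.sqrt (M (s1 n) * M (s2 n)) * (p n - Y n * H n / M n)) *
      (M n / Real.sqrt (M (s1 n) * M (s2 n)) * (q n - X n * K n / M n)) =
      (p n * M n - Y n * H n) * (q n * M n - X n * K n) / (M (s1 n) * M (s2 n)) := by
    have hM0 := h0.ne'
    calc _ = (M n * (p n - Y n * H n / M n)) * (M n * (q n - X n * K n / M n)) /
          (Real.sqrt (M (s1 n) * M (s2 n)) * Real.sqrt (M (s1 n) * M (s2 n))) := by
            ring
      _ = _ := by
        rw [hS, mul_sub, mul_sub, mul_div_cancel₀ _ hM0, mul_div_cancel₀ _ hM0,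
          mul_comm (M n) (p n), mul_comm (M n) (q n)]
  rw [hprod, div_mul_eq_mul_div, ← key, sub_div, div_self hpos.ne']
end
end

section
/- (Discrete Fundamental transformation.) Let p, q, Γ : ℤ² → ℝ with Γ² = 1 − pq, Γ ≠ 0 everywhere; let the column-vector functions X⃗, Y⃗ : ℤ² → ℝ³ and the row-vector functions H⃗, K⃗ : ℤ² → ℝⁿ satisfy X⃗₍₂₎ = (X⃗ + qY⃗)/Γ, Y⃗₍₁₎ = (Y⃗ + pX⃗)/Γ, H⃗₍₂₎ = (H⃗ + pK⃗)/Γ, K⃗₍₁₎ = (K⃗ + qH⃗)/Γ; let the matrix function R : ℤ² → ℝ^{3×n} satisfy R₍₁₎ − R = X⃗H⃗, R₍₂₎ − R = Y⃗K⃗; let scalars X, Y, H, K satisfy X₍₂₎ = (X + qY)/Γ, Y₍₁₎ = (Y + pX)/Γ, H₍₂₎ = (H + pK)/Γ, K₍₁₎ = (K + qH)/Γ; and let the potentials M⃗ (ℝ³-column valued), M⃗* (ℝⁿ-row valued) and M (scalar) satisfy M⃗₍ᵢ₎ − M⃗ = (X⃗H, Y⃗K), M⃗*₍ᵢ₎ −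 M⃗* = (XH⃗, YK⃗), M₍ᵢ₎ − M = (XH, YK) for i = 1, 2. Assume M > 0 at every lattice point. Define X⃗' = √(M/M₍₁₎)(X⃗ − X M⃗/M), Y⃗' = √(M/M₍₂₎)(Y⃗ − Y M⃗/M), H⃗' = √(M/M₍₁₎)(H⃗ − H M⃗*/M), K⃗' = √(M/M₍₂₎)(K⃗ − K M⃗*/M), p' = (M/√(M₍₁₎M₍₂₎))(p − YH/M), q' = (M/√(M₍₁₎M₍₂₎))(q − XK/M), Γ' = Γ·√(M·M₍₁₂₎)/√(M₍₁₎·M₍₂₎), and R' = R − M⃗M⃗*/M. Then Γ'² = 1 − p'q', and the primed quantities satisfy the same relations: X⃗'₍₂₎ = (X⃗' + q'Y⃗')/Γ', Y⃗'₍₁₎ = (Y⃗' + p'X⃗')/Γ', H⃗'₍₂₎ = (H⃗' + p'K⃗')/Γ', K⃗'₍₁₎ = (K⃗' + q'H⃗')/Γ', R'₍₁₎ − R' = X⃗'H⃗' and R'₍₂₎ − R' = Y⃗'K⃗'. -/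
/-!
At each lattice point everything is a rational identity in the values `m, m₁, m₂, m₁₂` of `M` at the
corners of the elementary square and in their (positive) square roots. The relation `Γ'² = 1 - p'q'`
is the quadrilateral identity `Γ² M M₍₁₂₎ = M₍₁₎ M₍₂₎ - (pM - YH)(qM - XK)`.

The system is invariant under the swap of the two directions (`X ↔ Y`, `H ↔ K`, `p ↔ q`) and under
the duality `X ↔ H`, `Y ↔ K`, `p ↔ q`, `M⃗ ↔ M⃗*`. The four linear equations are therefore instances
of `transformed_linear_eq`, and the two equations for `R'` are instances of `transformed_rank_one`.
-/

noncomputable section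

/-- The linear equation `X⃗'₍₂₎ = (X⃗' + q'Y⃗')/Γ'` at one lattice point. Here `xv, yv, mv` are the
vectors at the base point, `xv₂, mv₂, x₂` are values shifted in the second direction, and
`m, m₁, m₂, m₁₂` are the values of `M` at the corners of the elementary square. -/
lemma transformed_linear_eq {ι : Type*} {g q x y k x₂ m m₁ m₂ m₁₂ : ℝ}
    {xv yv mv xv₂ mv₂ : ι → ℝ} (hg : g ≠ 0)
    (hm : 0 < m) (hm₁ : 0 < m₁) (hm₂ : 0 < m₂) (hm₁₂ : 0 < m₁₂)
    (hxv : xv₂ = g⁻¹ • (xv + q • yv)) (hx : x₂ = g⁻¹ * (x + q * y))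
    (hmv : mv₂ - mv = k • yv) (hmm : m₂ - m = y * k) :
    Real.sqrt (m₂ / m₁₂) • (xv₂ - (x₂ / m₂) • mv₂) =
      (g * Real.sqrt (m * m₁₂) / Real.sqrt (m₁ * m₂))⁻¹ •
        (Real.sqrt (m / m₁) • (xv - (x / m) • mv) +
          (m / Real.sqrt (m₁ * m₂) * (q - x * k / m)) •
            (Real.sqrt (m / m₂) • (yv - (y / m) • mv))) := by
  ext i
  have hmvi : mv₂ i = mv i + k * yv i := by
    have := congrFun hmv i
    simp only [Pi.sub_apply, Pi.smul_apply, smul_eq_mul] at this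
    linarith
  subst hxv hx
  simp only [Pi.sub_apply, Pi.add_apply, Pi.smul_apply, smul_eq_mul, hmvi]
  rw [Real.sqrt_div hm₂.le, Real.sqrt_div hm.le, Real.sqrt_div hm.le, Real.sqrt_mul hm.le,
    Real.sqrt_mul hm₁.le]
  -- With `a, b, c, d` the square roots of `m, m₁, m₂, m₁₂`, the identity becomes rational.
  obtain ⟨a, ha, rfl⟩ : ∃ a, 0 < a ∧ m = a ^ 2 :=
    ⟨√m, Real.sqrt_pos.2 hm, (Real.sq_sqrt hm.le).symm⟩
  obtain ⟨b, hb, rfl⟩ : ∃ b, 0 < b ∧ m₁ = b ^ 2 :=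
    ⟨√m₁, Real.sqrt_pos.2 hm₁, (Real.sq_sqrt hm₁.le).symm⟩
  obtain ⟨c, hc, rfl⟩ : ∃ c, 0 < c ∧ m₂ = c ^ 2 :=
    ⟨√m₂, Real.sqrt_pos.2 hm₂, (Real.sq_sqrt hm₂.le).symm⟩
  obtain ⟨d, hd, rfl⟩ : ∃ d, 0 < d ∧ m₁₂ = d ^ 2 :=
    ⟨√m₁₂, Real.sqrt_pos.2 hm₁₂, (Real.sq_sqrt hm₁₂.le).symm⟩
  rw [Real.sqrt_sq ha.le, Real.sqrt_sq hb.le, Real.sqrt_sq hc.le, Real.sqrt_sq hd.le]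
  have hc2 : c ^ 2 = a ^ 2 + y * k := by linarith
  field_simp
  rw [hc2]
  ring

/-- The position equation `R'₍₁₎ - R' = X⃗'H⃗'` at one lattice point. -/
lemma transformed_rank_one {ι κ : Type*} {x h m m₁ : ℝ} {xv mv mv₁ : ι → ℝ}
    {hv ms ms₁ : κ → ℝ} {r r₁ : Matrix ι κ ℝ} (hm : 0 < m) (hm₁ : 0 < m₁)
    (hr : r₁ - r = Matrix.vecMulVec xv hv)
    (hmv : mv₁ - mv = h • xv) (hms : ms₁ - ms = x • hv) (hmm : m₁ - m = x * h) :
    (r₁ - m₁⁻¹ • Matrix.vecMulVec mv₁ ms₁) - (r - m⁻¹ • Matrix.vecMulVec mv ms) =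
      Matrix.vecMulVec (Real.sqrt (m / m₁) • (xv - (x / m) • mv))
        (Real.sqrt (m / m₁) • (hv - (h / m) • ms)) := by
  obtain rfl := eq_add_of_sub_eq hr
  obtain rfl := eq_add_of_sub_eq hmv
  obtain rfl := eq_add_of_sub_eq hms
  obtain rfl := eq_add_of_sub_eq hmm
  ext i j
  have hs : √(m / (x * h + m)) * √(m / (x * h + m)) = m / (x * h + m) :=
    Real.mul_self_sqrt (by positivity)
  simp only [Matrix.sub_apply, Matrix.add_apply, Matrix.smul_apply, Matrix.vecMulVec_apply,
    Pi.sub_apply, Pi.add_apply, Pi.smul_apply, smul_eq_mul]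
  rw [mul_mul_mul_comm, hs]
  field_simp
  ring

/-- The quadrilateral identity `Γ² M M₍₁₂₎ = M₍₁₎ M₍₂₎ - (pM - YH)(qM - XK)`, divided by
`M₍₁₎ M₍₂₎` and expressed in the transformed coefficients. -/
lemma transformed_gamma_sq {g p q x y h k x₂ h₂ m m₁ m₂ m₁₂ : ℝ} (hg : g ≠ 0)
    (hm : 0 < m) (hm₁ : 0 < m₁) (hm₂ : 0 < m₂) (hm₁₂ : 0 < m₁₂) (hgpq : g ^ 2 = 1 - p * q)
    (hx : x₂ = g⁻¹ * (x + q * y)) (hh : h₂ = g⁻¹ * (h + p * k))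
    (h₁ : m₁ - m = x * h) (h₂m : m₂ - m = y * k) (h₁₂ : m₁₂ - m₂ = x₂ * h₂) :
    (g * Real.sqrt (m * m₁₂) / Real.sqrt (m₁ * m₂)) ^ 2 =
      1 - m / Real.sqrt (m₁ * m₂) * (p - y * h / m) *
        (m / Real.sqrt (m₁ * m₂) * (q - x * k / m)) := by
  have hs : √(m₁ * m₂) ^ 2 = m₁ * m₂ := Real.sq_sqrt (by positivity)
  have hpos : 0 < √(m₁ * m₂) := Real.sqrt_pos.2 (by positivity)
  have hquad : g ^ 2 * (m * m₁₂) = m₁ * m₂ - (p * m - y * h) * (q * m - x * k) := by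
    have e : g ^ 2 * (x₂ * h₂) = (x + q * y) * (h + p * k) := by
      subst hx hh
      field_simp
    have e1 : m₁₂ = m₂ + x₂ * h₂ := by linarith
    have e2 : m₁ = m + x * h := by linarith
    have e3 : m₂ = m + y * k := by linarith
    calc g ^ 2 * (m * m₁₂) = m * (g ^ 2 * m₂ + g ^ 2 * (x₂ * h₂)) := by rw [e1]; ring
      _ = _ := by rw [e, hgpq, e2, e3]; ring
  rw [div_pow, mul_pow, Real.sq_sqrt (by positivity : 0 ≤ m * m₁₂), hquad]
  field_simp
  rw [hs]

/-- the discrete Fundamental transformation: the linear systems and the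
defining relations for the position matrix are invariant under the transformation
generated by the eigenfunctions `X, Y`, adjoint eigenfunctions `H, K` and the bilinear
potentials `M⃗, M⃗*, M`. -/
theorem stmt_12 {nn : ℕ} (p q Γ : ℤ × ℤ → ℝ)
    (Xv Yv : ℤ × ℤ → Fin 3 → ℝ) (Hv Kv : ℤ × ℤ → Fin nn → ℝ)
    (R : ℤ × ℤ → Matrix (Fin 3) (Fin nn) ℝ)
    (X Y H K M : ℤ × ℤ → ℝ) (Mv : ℤ × ℤ → Fin 3 → ℝ) (Ms : ℤ × ℤ → Fin nn → ℝ)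
    (X' Y' : ℤ × ℤ → Fin 3 → ℝ) (H' K' : ℤ × ℤ → Fin nn → ℝ)
    (p' q' Γ' : ℤ × ℤ → ℝ) (R' : ℤ × ℤ → Matrix (Fin 3) (Fin nn) ℝ)
    (hΓ : ∀ n, Γ n ^ 2 = 1 - p n * q n) (hΓ0 : ∀ n, Γ n ≠ 0)
    (hXv : ∀ n, Xv (s2 n) = (Γ n)⁻¹ • (Xv n + q n • Yv n))
    (hYv : ∀ n, Yv (s1 n) = (Γ n)⁻¹ • (Yv n + p n • Xv n))
    (hHv : ∀ n, Hv (s2 n) = (Γ n)⁻¹ • (Hv n + p n • Kv n))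
    (hKv : ∀ n, Kv (s1 n) = (Γ n)⁻¹ • (Kv n + q n • Hv n))
    (hR1 : ∀ n, R (s1 n) - R n = Matrix.vecMulVec (Xv n) (Hv n))
    (hR2 : ∀ n, R (s2 n) - R n = Matrix.vecMulVec (Yv n) (Kv n))
    (hX : ∀ n, X (s2 n) = (Γ n)⁻¹ * (X n + q n * Y n))
    (hY : ∀ n, Y (s1 n) = (Γ n)⁻¹ * (Y n + p n * X n))
    (hH : ∀ n, H (s2 n) = (Γ n)⁻¹ * (H n + p n * K n))
    (hK : ∀ n, K (s1 n) = (Γ n)⁻¹ * (K n + q n * H n))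
    (hMv1 : ∀ n, Mv (s1 n) - Mv n = H n • Xv n)
    (hMv2 : ∀ n, Mv (s2 n) - Mv n = K n • Yv n)
    (hMs1 : ∀ n, Ms (s1 n) - Ms n = X n • Hv n)
    (hMs2 : ∀ n, Ms (s2 n) - Ms n = Y n • Kv n)
    (hM1 : ∀ n, M (s1 n) - M n = X n * H n)
    (hM2 : ∀ n, M (s2 n) - M n = Y n * K n)
    (hMpos : ∀ n, 0 < M n)
    (hX' : ∀ n, X' n = Real.sqrt (M n / M (s1 n)) • (Xv n - (X n / M n) • Mv n))
    (hY' : ∀ n, Y' n = Real.sqrt (M n / M (s2 n)) • (Yv n - (Y n / M n) • Mv n))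
    (hH' : ∀ n, H' n = Real.sqrt (M n / M (s1 n)) • (Hv n - (H n / M n) • Ms n))
    (hK' : ∀ n, K' n = Real.sqrt (M n / M (s2 n)) • (Kv n - (K n / M n) • Ms n))
    (hp' : ∀ n, p' n = M n / Real.sqrt (M (s1 n) * M (s2 n)) * (p n - Y n * H n / M n))
    (hq' : ∀ n, q' n = M n / Real.sqrt (M (s1 n) * M (s2 n)) * (q n - X n * K n / M n))
    (hΓ' : ∀ n, Γ' n = Γ n * Real.sqrt (M n * M (s12 n)) / Real.sqrt (M (s1 n) * M (s2 n)))
    (hR' : ∀ n, R' n = R n - (M n)⁻¹ • Matrix.vecMulVec (Mv n) (Ms n)) :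
    ∀ n, Γ' n ^ 2 = 1 - p' n * q' n ∧
      X' (s2 n) = (Γ' n)⁻¹ • (X' n + q' n • Y' n) ∧
      Y' (s1 n) = (Γ' n)⁻¹ • (Y' n + p' n • X' n) ∧
      H' (s2 n) = (Γ' n)⁻¹ • (H' n + p' n • K' n) ∧
      K' (s1 n) = (Γ' n)⁻¹ • (K' n + q' n • H' n) ∧
      R' (s1 n) - R' n = Matrix.vecMulVec (X' n) (H' n) ∧
      R' (s2 n) - R' n = Matrix.vecMulVec (Y' n) (K' n) := by
  intro n
  have c12 : s2 (s1 n) = s12 n := rfl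
  have c21 : s1 (s2 n) = s12 n := rfl
  have hm := hMpos n
  have hm₁ := hMpos (s1 n)
  have hm₂ := hMpos (s2 n)
  have hm₁₂ := hMpos (s12 n)
  refine ⟨?_, ?_, ?_, ?_, ?_, ?_, ?_⟩
  · rw [hΓ', hp', hq']
    exact transformed_gamma_sq (hΓ0 n) hm hm₁ hm₂ hm₁₂ (hΓ n) (hX n) (hH n) (hM1 n) (hM2 n)
      (hM1 (s2 n))
  · rw [hX', hX', hY', hΓ', hq', c21]
    exact transformed_linear_eq (hΓ0 n) hm hm₁ hm₂ hm₁₂ (hXv n) (hX n) (hMv2 n) (hM2 n)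
  · rw [hY', hY', hX', hΓ', hp', c12, mul_comm (M (s1 n))]
    exact transformed_linear_eq (hΓ0 n) hm hm₂ hm₁ hm₁₂ (hYv n) (hY n) (hMv1 n) (hM1 n)
  · rw [hH', hH', hK', hΓ', hp', c21, mul_comm (Y n)]
    exact transformed_linear_eq (hΓ0 n) hm hm₁ hm₂ hm₁₂ (hHv n) (hH n) (hMs2 n)
      ((hM2 n).trans (mul_comm _ _))
  · rw [hK', hK', hH', hΓ', hq', c12, mul_comm (M (s1 n)), mul_comm (X n)]
    exact transformed_linear_eq (hΓ0 n) hm hm₂ hm₁ hm₁₂ (hKv n) (hK n) (hMs1 n)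
      ((hM1 n).trans (mul_comm _ _))
  · rw [hR', hR', hX', hH']
    exact transformed_rank_one hm hm₁ (hR1 n) (hMv1 n) (hMs1 n) (hM1 n)
  · rw [hR', hR', hY', hK']
    exact transformed_rank_one hm hm₂ (hR2 n) (hMv2 n) (hMs2 n) (hM2 n)
end
end

section
/- Let X⃗, Y⃗ : ℤ² → ℝ³ with ‖X⃗‖² = 1, ‖Y⃗‖² = 1 and p, q, Γ : ℤ² → ℝ with Γ² = 1 − pq, Γ ≠ 0 everywhere satisfy X⃗₍₂₎ = (X⃗ + qY⃗)/Γ, Y⃗₍₁₎ = (Y⃗ + pX⃗)/Γ, and suppose the curvature-lattice condition 2 X⃗·Y⃗ + p + q = 0 holds at every lattice point. Let the scalars H, K satisfy the adjoint system H₍₂₎ = (H + pK)/Γ, K₍₁₎ = (K + qH)/Γ, and let M⃗ : ℤ² → ℝ³ satisfy M⃗₍₁₎ − M⃗ = X⃗·H, M⃗₍₂₎ − M⃗ = Y⃗·K. Then the scalar functions X := (M⃗₍₁₎ + M⃗)·X⃗ and Y := (M⃗₍₂₎ + M⃗)·Y⃗ satisfy the eigenfunction equations X₍₂₎ = (X +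 qY)/Γ and Y₍₁₎ = (Y + pX)/Γ. -/
/-!
Since `X⃗` and `Y⃗` are unit vectors, `X = 2 M⃗·X⃗ + H` and `Y = 2 M⃗·Y⃗ + K`
(`dot3_add_of_sub_eq_smul`). Expanding the shift,
`Γ X₍₂₎ = 2 (M⃗ + K Y⃗)·(X⃗ + q Y⃗) + H + p K = X + q Y + K (2 X⃗·Y⃗ + p + q)`,
and the last term vanishes by the curvature-lattice condition. This is
`two_dot3_add_evolution`; the equation for `Y₍₁₎` is the same identity with the roles of the
two lattice directions exchanged.
-/

noncomputable section

/-- The discrete product rule `(M' + M)·V = 2 M·V + h` for an edge `M' - M = h V` along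
a unit vector `V`. -/
theorem dot3_add_of_sub_eq_smul {M' M V : Fin 3 → ℝ} {h : ℝ} (hV : dot3 V V = 1)
    (hM : M' - M = h • V) : dot3 (M' + M) V = 2 * dot3 M V + h := by
  rw [sub_eq_iff_eq_add.mp hM]
  simp only [dot3, Fin.sum_univ_three, Pi.add_apply, Pi.smul_apply, smul_eq_mul] at hV ⊢
  linear_combination h * hV

/-- Evolution of `2 M·U + h` across an edge `M' - M = k V`, where `U' = g (U + b V)` and
`h' = g (h + a k)`; the constraint `2 U·V + a + b = 0` cancels the terms proportional to `k`
that do not belong to `2 M·V + k`. -/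
theorem two_dot3_add_evolution {M M' U U' V : Fin 3 → ℝ} {a b g h h' k : ℝ}
    (hV : dot3 V V = 1) (hUV : 2 * dot3 U V + a + b = 0)
    (hM : M' - M = k • V) (hU : U' = g • (U + b • V)) (hh : h' = g * (h + a * k)) :
    2 * dot3 M' U' + h' = g * ((2 * dot3 M U + h) + b * (2 * dot3 M V + k)) := by
  rw [sub_eq_iff_eq_add.mp hM, hU, hh]
  simp only [dot3, Fin.sum_univ_three, Pi.add_apply, Pi.smul_apply, smul_eq_mul] at hV hUV ⊢
  linear_combination g * k * hUV + 2 * g * k * b * hV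

/-- for a curvature lattice, the scalars `X = (M⃗₍₁₎ + M⃗)·X⃗` and
`Y = (M⃗₍₂₎ + M⃗)·Y⃗` constitute eigenfunctions, i.e. they satisfy
`X₍₂₎ = (X + qY)/Γ` and `Y₍₁₎ = (Y + pX)/Γ`. -/
theorem stmt_13 (Xv Yv : ℤ × ℤ → Fin 3 → ℝ) (p q Γ H K : ℤ × ℤ → ℝ)
    (Mv : ℤ × ℤ → Fin 3 → ℝ) (X Y : ℤ × ℤ → ℝ)
    (hXu : ∀ n, dot3 (Xv n) (Xv n) = 1) (hYu : ∀ n, dot3 (Yv n) (Yv n) = 1)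
    (hΓ : ∀ n, Γ n ^ 2 = 1 - p n * q n) (hΓ0 : ∀ n, Γ n ≠ 0)
    (hXv : ∀ n, Xv (s2 n) = (Γ n)⁻¹ • (Xv n + q n • Yv n))
    (hYv : ∀ n, Yv (s1 n) = (Γ n)⁻¹ • (Yv n + p n • Xv n))
    (hcurv : ∀ n, 2 * dot3 (Xv n) (Yv n) + p n + q n = 0)
    (hH : ∀ n, H (s2 n) = (Γ n)⁻¹ * (H n + p n * K n))
    (hK : ∀ n, K (s1 n) = (Γ n)⁻¹ * (K n + q n * H n))
    (hMv1 : ∀ n, Mv (s1 n) - Mv n = H n • Xv n)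
    (hMv2 : ∀ n, Mv (s2 n) - Mv n = K n • Yv n)
    (hXdef : ∀ n, X n = dot3 (Mv (s1 n) + Mv n) (Xv n))
    (hYdef : ∀ n, Y n = dot3 (Mv (s2 n) + Mv n) (Yv n)) :
    ∀ n, X (s2 n) = (Γ n)⁻¹ * (X n + q n * Y n) ∧
      Y (s1 n) = (Γ n)⁻¹ * (Y n + p n * X n) := by
  have hX2 : ∀ n, X n = 2 * dot3 (Mv n) (Xv n) + H n := fun n =>
    (hXdef n).trans (dot3_add_of_sub_eq_smul (hXu n) (hMv1 n))
  have hY2 : ∀ n, Y n = 2 * dot3 (Mv n) (Yv n) + K n := fun n =>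
    (hYdef n).trans (dot3_add_of_sub_eq_smul (hYu n) (hMv2 n))
  have hcurv' : ∀ n, 2 * dot3 (Yv n) (Xv n) + q n + p n = 0 := fun n => by
    have h := hcurv n
    simp only [dot3, Fin.sum_univ_three] at h ⊢
    linear_combination h
  intro n
  rw [hX2 (s2 n), hY2 (s1 n), hX2 n, hY2 n]
  exact ⟨two_dot3_add_evolution (hYu n) (hcurv n) (hMv2 n) (hXv n) (hH n),
    two_dot3_add_evolution (hXu n) (hcurv' n) (hMv1 n) (hYv n) (hK n)⟩
end
end

section
/- Let S be a constant symmetric real n×n matrix defining the bilinear form ⟨u, v⟩ = u S vᵀ on row vectors in ℝⁿ. Let H⃗, K⃗ : ℤ² → ℝⁿ and p, q, Γ : ℤ² → ℝ with Γ² = 1 − pq, Γ ≠ 0 everywhere satisfy H⃗₍₂₎ = (H⃗ + pK⃗)/Γ, K⃗₍₁₎ = (K⃗ + qH⃗)/Γ, and suppose the dual discrete orthogonality condition 2⟨H⃗, K⃗⟩ + p⟨K⃗, K⃗⟩ + q⟨H⃗, H⃗⟩ = 0 holds at every lattice point. Let the scalars X, Y satisfy X₍₂₎ = (X + qY)/Γ,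 Y₍₁₎ = (Y + pX)/Γ, let λ ∈ ℝ, and let M⃗* : ℤ² → ℝⁿ satisfy M⃗*₍₁₎ − M⃗* = X·H⃗, M⃗*₍₂₎ − M⃗* = Y·K⃗. Then the scalar functions H := λ⟨M⃗*₍₁₎ + M⃗*, H⃗⟩ and K := λ⟨M⃗*₍₂₎ + M⃗*, K⃗⟩ satisfy the adjoint eigenfunction equations H₍₂₎ = (H + pK)/Γ and K₍₁₎ = (K + qH)/Γ. -/
/-!
The two conclusions are exchanged by the symmetry `H⃗ ↔ K⃗`, `p ↔ q`, `X ↔ Y`, `₍₁₎ ↔ ₍₂₎`, so both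
are instances of one pointwise identity, `formS_shift_identity`. For that identity, write
`u = H⃗`, `v = K⃗`, `u' = H⃗₍₂₎ = (u + p v)/Γ`. The orthogonality condition gives
`⟨u + p v, u + p v⟩ = (1 - p q)⟨u, u⟩ = Γ² ⟨u, u⟩`, that is `⟨u', u'⟩ = ⟨u, u⟩`. Expanding
`⟨M⃗*₍₁₂₎ + M⃗*₍₂₎, u'⟩ = ⟨2 M⃗* + 2 Y v + X₍₂₎ u', u'⟩` with this, the difference of the two
sides of the claim is `Y/Γ` times the orthogonality expression, hence zero.
-/

noncomputable section

/-- The bilinear form `⟨u, v⟩ = u S vᵀ` on row vectors in ℝⁿ given by a matrix `S`. -/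
def formS {nn : ℕ} (S : Matrix (Fin nn) (Fin nn) ℝ) (u v : Fin nn → ℝ) : ℝ :=
  ∑ i, ∑ j, u i * S i j * v j

lemma formS_add_left {nn : ℕ} (S : Matrix (Fin nn) (Fin nn) ℝ) (u v w : Fin nn → ℝ) :
    formS S (u + v) w = formS S u w + formS S v w := by
  simp [formS, add_mul, Finset.sum_add_distrib]

lemma formS_smul_left {nn : ℕ} (S : Matrix (Fin nn) (Fin nn) ℝ) (c : ℝ) (u w : Fin nn → ℝ) :
    formS S (c • u) w = c * formS S u w := by
  simp [formS, mul_assoc, Finset.mul_sum]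

lemma formS_comm {nn : ℕ} {S : Matrix (Fin nn) (Fin nn) ℝ} (hS : S.IsSymm)
    (u v : Fin nn → ℝ) : formS S u v = formS S v u := by
  unfold formS
  rw [Finset.sum_comm]
  refine Finset.sum_congr rfl fun i _ => Finset.sum_congr rfl fun j _ => ?_
  rw [hS.apply i j]
  ring

lemma formS_add_right {nn : ℕ} (S : Matrix (Fin nn) (Fin nn) ℝ) (u v w : Fin nn → ℝ) :
    formS S w (u + v) = formS S w u + formS S w v := by
  simp [formS, mul_add, Finset.sum_add_distrib]

lemma formS_smul_right {nn : ℕ} (S : Matrix (Fin nn) (Fin nn) ℝ) (c : ℝ) (u w : Fin nn → ℝ) :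
    formS S w (c • u) = c * formS S w u := by
  simp [formS, mul_left_comm, Finset.mul_sum]

/-- The adjoint eigenfunction equation at one lattice point. Here `u'`, `x'` are the shifts of
`u`, `x` in the direction of `v`, and `m₁`, `m₂`, `m₁₂` are the shifts of `m` in the direction
of `u`, of `v`, and of both. -/
lemma formS_shift_identity {nn : ℕ} {S : Matrix (Fin nn) (Fin nn) ℝ} (hS : S.IsSymm)
    {u v u' m m₁ m₂ m₁₂ : Fin nn → ℝ} {p q g x y x' : ℝ} (hg : g ^ 2 = 1 - p * q) (hg0 : g ≠ 0)
    (horth : 2 * formS S u v + p * formS S v v + q * formS S u u = 0)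
    (hu : u' = g⁻¹ • (u + p • v)) (hx : x' = g⁻¹ * (x + q * y))
    (hm₁ : m₁ - m = x • u) (hm₂ : m₂ - m = y • v) (hm₁₂ : m₁₂ - m₂ = x' • u') :
    formS S (m₁₂ + m₂) u' = g⁻¹ * (formS S (m₁ + m) u + p * formS S (m₂ + m) v) := by
  have hnorm : formS S u' u' = formS S u u := by
    have h : formS S u' u' = (g ^ 2)⁻¹ *
        (formS S u u + 2 * p * formS S u v + p ^ 2 * formS S v v) := by
      simp only [hu, formS_add_left, formS_smul_left, formS_add_right, formS_smul_right,
        formS_comm hS v u]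
      ring
    rw [h, inv_mul_eq_iff_eq_mul₀ (pow_ne_zero 2 hg0), hg]
    linear_combination p * horth
  obtain rfl := sub_eq_iff_eq_add.mp hm₁
  obtain rfl := sub_eq_iff_eq_add.mp hm₂
  obtain rfl := sub_eq_iff_eq_add.mp hm₁₂
  -- `⟨u', u'⟩` is rewritten before `u'` is expanded in the remaining terms.
  simp only [formS_add_left, formS_smul_left, hnorm]
  simp only [hu, hx, formS_add_right, formS_smul_right, formS_comm hS v u]
  linear_combination g⁻¹ * y * horth

/-- under the dual discrete orthogonality condition, the scalars
`H = λ⟨M⃗*₍₁₎ + M⃗*, H⃗⟩` and `K = λ⟨M⃗*₍₂₎ + M⃗*, K⃗⟩` constitute adjoint eigenfunctions,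
i.e. they satisfy `H₍₂₎ = (H + pK)/Γ` and `K₍₁₎ = (K + qH)/Γ`. -/
theorem stmt_14 {nn : ℕ} (S : Matrix (Fin nn) (Fin nn) ℝ) (hS : S.IsSymm)
    (Hv Kv : ℤ × ℤ → Fin nn → ℝ) (p q Γ X Y : ℤ × ℤ → ℝ) (lam : ℝ)
    (Ms : ℤ × ℤ → Fin nn → ℝ) (H K : ℤ × ℤ → ℝ)
    (hΓ : ∀ n, Γ n ^ 2 = 1 - p n * q n) (hΓ0 : ∀ n, Γ n ≠ 0)
    (hHv : ∀ n, Hv (s2 n) = (Γ n)⁻¹ • (Hv n + p n • Kv n))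
    (hKv : ∀ n, Kv (s1 n) = (Γ n)⁻¹ • (Kv n + q n • Hv n))
    (horth : ∀ n, 2 * formS S (Hv n) (Kv n) + p n * formS S (Kv n) (Kv n) +
        q n * formS S (Hv n) (Hv n) = 0)
    (hX : ∀ n, X (s2 n) = (Γ n)⁻¹ * (X n + q n * Y n))
    (hY : ∀ n, Y (s1 n) = (Γ n)⁻¹ * (Y n + p n * X n))
    (hMs1 : ∀ n, Ms (s1 n) - Ms n = X n • Hv n)
    (hMs2 : ∀ n, Ms (s2 n) - Ms n = Y n • Kv n)
    (hHdef : ∀ n, H n = lam * formS S (Ms (s1 n) + Ms n) (Hv n))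
    (hKdef : ∀ n, K n = lam * formS S (Ms (s2 n) + Ms n) (Kv n)) :
    ∀ n, H (s2 n) = (Γ n)⁻¹ * (H n + p n * K n) ∧
      K (s1 n) = (Γ n)⁻¹ * (K n + q n * H n) := by
  intro n
  constructor
  · have h := formS_shift_identity hS (hΓ n) (hΓ0 n) (horth n) (hHv n) (hX n) (hMs1 n) (hMs2 n)
      (hMs1 (s2 n))
    rw [hHdef, hHdef, hKdef, h]
    ring
  · have horth' : 2 * formS S (Kv n) (Hv n) + q n * formS S (Hv n) (Hv n) +
        p n * formS S (Kv n) (Kv n) = 0 := by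
      rw [formS_comm hS (Kv n)]
      linear_combination horth n
    have h := formS_shift_identity hS ((hΓ n).trans (by ring)) (hΓ0 n) horth' (hKv n) (hY n)
      (hMs2 n) (hMs1 n) (hMs2 (s1 n))
    rw [hKdef, hKdef, hHdef, h]
    ring
end
end

section
/- (The discrete Ribaucour transformation preserves curvature lattices.) Let X⃗, Y⃗ : ℤ² → ℝ³ with ‖X⃗‖² = 1, ‖Y⃗‖² = 1 and p, q, Γ : ℤ² → ℝ with Γ² = 1 − pq, Γ ≠ 0 everywhere satisfy X⃗₍₂₎ = (X⃗ + qY⃗)/Γ, Y⃗₍₁₎ = (Y⃗ + pX⃗)/Γ and 2 X⃗·Y⃗ + p + q = 0 at every lattice point. Let the scalars H, K satisfy H₍₂₎ = (H + pK)/Γ, K₍₁₎ = (K + qH)/Γ, let M⃗ : ℤ² → ℝ³ satisfy M⃗₍₁₎ − M⃗ = X⃗·H, M⃗₍₂₎ − M⃗ = Y⃗·K, set X = (M⃗₍₁₎ + M⃗)·X⃗, Y = (M⃗₍₂₎ + M⃗)·Y⃗ and M = ‖M⃗‖², and assume M > 0 at every lattice point. Define X⃗' = √(M/M₍₁₎)(X⃗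 − X M⃗/M), Y⃗' = √(M/M₍₂₎)(Y⃗ − Y M⃗/M), p' = (M/√(M₍₁₎M₍₂₎))(p − YH/M), q' = (M/√(M₍₁₎M₍₂₎))(q − XK/M). Then at every lattice point ‖X⃗'‖² = 1, ‖Y⃗'‖² = 1 and 2 X⃗'·Y⃗' + p' + q' = 0. -/
/-!
The transformed vectors are, up to positive factors, `x - (X / M) • m`, where `x`, `y` are the
tangent vectors and `m` the position vector. Since `m₍₁₎ = m + H • x` with `‖x‖ = 1`,
one has `X = 2 m·x + H` and `M₍₁₎ = M + X H`, and likewise in the second direction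
(`edge_relations`). Hence `‖x - (X / M) • m‖² = 1 + X H / M = M₍₁₎ / M`
(`dot3_transformed_self`), which is exactly cancelled by the normalising factor `√(M / M₍₁₎)`.
For the mixed relation both square roots combine to `M / √(M₍₁₎ M₍₂₎)`, the common prefactor
of `p'` and `q'`; substituting `2 m·x = X - H` and `2 m·y = Y - K` reduces what remains to
`2 x·y + p + q = 0`.
-/

noncomputable section

/-- Consequences of moving from `m` to `m₁ = m + h • x` along a unit vector `x`: the inner product
`(m₁ + m)·x` is `2 m·x + h`, and the squared length of the position vector grows by `h` times it. -/
lemma edge_relations {m m₁ x : Fin 3 → ℝ} {h : ℝ} (hx : dot3 x x = 1) (hm : m₁ - m = h • x) :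
    dot3 (m₁ + m) x = 2 * dot3 m x + h ∧
      dot3 m₁ m₁ = dot3 m m + dot3 (m₁ + m) x * h := by
  obtain rfl : m₁ = m + h • x := by rw [← hm]; abel
  simp only [dot3, Fin.sum_univ_three, Pi.add_apply, Pi.smul_apply, smul_eq_mul] at hx ⊢
  constructor
  · linear_combination h * hx
  · ring

/-- The vector `√(M / M₁) • (x - (X / M) • m)` has unit length when `M = ‖m‖²`, `X = 2 m·x + h`
and `M₁ = M + X h`. -/
lemma dot3_transformed_self {m x : Fin 3 → ℝ} {h X M M₁ : ℝ} (hx : dot3 x x = 1)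
    (hX : X = 2 * dot3 m x + h) (hM : M = dot3 m m) (hM₁ : M₁ = M + X * h)
    (hpos : 0 < M) (hpos₁ : 0 < M₁) :
    dot3 (Real.sqrt (M / M₁) • (x - (X / M) • m)) (Real.sqrt (M / M₁) • (x - (X / M) • m))
      = 1 := by
  have expand : ∀ a b : ℝ, dot3 (a • (x - b • m)) (a • (x - b • m))
      = a ^ 2 * (dot3 x x - 2 * b * dot3 m x + b ^ 2 * dot3 m m) := by
    intro a b
    simp only [dot3, Fin.sum_univ_three, Pi.sub_apply, Pi.smul_apply, smul_eq_mul]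
    ring
  rw [expand, Real.sq_sqrt (div_pos hpos hpos₁).le, hx, ← hM]
  have hmx : dot3 m x = (X - h) / 2 := by linarith
  rw [hmx]
  field_simp
  linear_combination -hM₁

/-- the discrete Ribaucour transformation preserves curvature lattices:
with `X = (M⃗₍₁₎ + M⃗)·X⃗`, `Y = (M⃗₍₂₎ + M⃗)·Y⃗` and `M = ‖M⃗‖² > 0`, the transformed
tangent vectors satisfy `‖X⃗'‖² = 1`, `‖Y⃗'‖² = 1` and `2X⃗'·Y⃗' + p' + q' = 0`. -/
theorem stmt_16 (Xv Yv : ℤ × ℤ → Fin 3 → ℝ) (p q Γ H K : ℤ × ℤ → ℝ)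
    (Mv : ℤ × ℤ → Fin 3 → ℝ) (X Y M : ℤ × ℤ → ℝ)
    (X' Y' : ℤ × ℤ → Fin 3 → ℝ) (p' q' : ℤ × ℤ → ℝ)
    (hXu : ∀ n, dot3 (Xv n) (Xv n) = 1) (hYu : ∀ n, dot3 (Yv n) (Yv n) = 1)
    (hΓ : ∀ n, Γ n ^ 2 = 1 - p n * q n) (hΓ0 : ∀ n, Γ n ≠ 0)
    (hXv : ∀ n, Xv (s2 n) = (Γ n)⁻¹ • (Xv n + q n • Yv n))
    (hYv : ∀ n, Yv (s1 n) = (Γ n)⁻¹ • (Yv n + p n • Xv n))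
    (hcurv : ∀ n, 2 * dot3 (Xv n) (Yv n) + p n + q n = 0)
    (hH : ∀ n, H (s2 n) = (Γ n)⁻¹ * (H n + p n * K n))
    (hK : ∀ n, K (s1 n) = (Γ n)⁻¹ * (K n + q n * H n))
    (hMv1 : ∀ n, Mv (s1 n) - Mv n = H n • Xv n)
    (hMv2 : ∀ n, Mv (s2 n) - Mv n = K n • Yv n)
    (hXdef : ∀ n, X n = dot3 (Mv (s1 n) + Mv n) (Xv n))
    (hYdef : ∀ n, Y n = dot3 (Mv (s2 n) + Mv n) (Yv n))
    (hMdef : ∀ n, M n = dot3 (Mv n) (Mv n))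
    (hMpos : ∀ n, 0 < M n)
    (hX' : ∀ n, X' n = Real.sqrt (M n / M (s1 n)) • (Xv n - (X n / M n) • Mv n))
    (hY' : ∀ n, Y' n = Real.sqrt (M n / M (s2 n)) • (Yv n - (Y n / M n) • Mv n))
    (hp' : ∀ n, p' n = M n / Real.sqrt (M (s1 n) * M (s2 n)) * (p n - Y n * H n / M n))
    (hq' : ∀ n, q' n = M n / Real.sqrt (M (s1 n) * M (s2 n)) * (q n - X n * K n / M n)) :
    ∀ n, dot3 (X' n) (X' n) = 1 ∧ dot3 (Y' n) (Y' n) = 1 ∧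
      2 * dot3 (X' n) (Y' n) + p' n + q' n = 0 := by
  intro n
  obtain ⟨hX, hM₁⟩ := edge_relations (hXu n) (hMv1 n)
  obtain ⟨hY, hM₂⟩ := edge_relations (hYu n) (hMv2 n)
  rw [← hXdef] at hX hM₁
  rw [← hYdef] at hY hM₂
  rw [← hMdef, ← hMdef] at hM₁ hM₂
  have hM := hMpos n
  refine ⟨?_, ?_, ?_⟩
  · rw [hX']
    exact dot3_transformed_self (hXu n) hX (hMdef n) hM₁ hM (hMpos _)
  · rw [hY']
    exact dot3_transformed_self (hYu n) hY (hMdef n) hM₂ hM (hMpos _)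
  · have expand : ∀ a b c d : ℝ,
        dot3 (a • (Xv n - b • Mv n)) (c • (Yv n - d • Mv n))
          = a * c * (dot3 (Xv n) (Yv n) - b * dot3 (Mv n) (Yv n) - d * dot3 (Mv n) (Xv n)
              + b * d * dot3 (Mv n) (Mv n)) := by
      intro a b c d
      simp only [dot3, Fin.sum_univ_three, Pi.sub_apply, Pi.smul_apply, smul_eq_mul]
      ring
    have hsqrt : Real.sqrt (M n / M (s1 n)) * Real.sqrt (M n / M (s2 n))
        = M n / Real.sqrt (M (s1 n) * M (s2 n)) := by
      rw [← Real.sqrt_mul (div_pos hM (hMpos _)).le, div_mul_div_comm,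
        Real.sqrt_div (mul_pos hM hM).le, Real.sqrt_mul_self hM.le]
    rw [hX', hY', hp', hq', expand, hsqrt, ← hMdef]
    have hmx : dot3 (Mv n) (Xv n) = (X n - H n) / 2 := by linarith
    have hmy : dot3 (Mv n) (Yv n) = (Y n - K n) / 2 := by linarith
    have hxy : dot3 (Xv n) (Yv n) = -(p n + q n) / 2 := by linarith [hcurv n]
    rw [hmx, hmy, hxy]
    field_simp
    ring
end
end
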